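/- Let G be an additive abelian group, i : ℤ → G an injective homomorphism, and p : G → ℤ × ℤ/4 a surjective homomorphism with range i = ker p (a short exact sequence 0 → ℤ → G → ℤ ⊕ ℤ/4 → 0). If the image of i(1) in the quotient G/4G has additive order 4 (equivalently, 2·i(1) ∉ 4G), then p admits a section, i.e. there is a homomorphism s : ℤ × ℤ/4 → G with p∘s = id. -/

import Mathlib

/-!
Splitting over the free summand is automatic, so only the torsion summand `ℤ/n` matters: an
arbitrary lift `b` of its generator satisfies `n • b ∈ ker p`, and it can be corrected by an element
of `ker p` to one killed by `n` as soon as every element of `ker p` divisible by `n` in `G` is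
already divisible by `n` in `ker p`. When `ker p` is generated by `c`, this holds if `c` has order
`n` in `G / nG`: if `k • c ∈ nG` then `n ∣ k`.
-/

section

variable {G H : Type*} [AddCommGroup G] [AddCommGroup H]

/-- `K` is pure in `G` with respect to the single integer `n`, that is `K ∩ nG = nK`; a subgroup is
pure in the usual sense when this holds for all `n`. It is the condition under which `n`-torsion
elements of `G ⧸ K` lift to `n`-torsion elements of `G`. -/
def IsPureAt (K : AddSubgroup G) (n : ℕ) : Prop :=
  ∀ g : G, n • g ∈ K → ∃ k ∈ K, n • k = n • g

theorem isPureAt_zmultiples_of_addOrderOf_mk_eq {n : ℕ} {c : G}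
    (hc : addOrderOf (c : G ⧸ (nsmulAddMonoidHom n : G →+ G).range) = n) :
    IsPureAt (AddSubgroup.zmultiples c) n := by
  rintro g ⟨k, hk : k • c = n • g⟩
  have hkc : k • (c : G ⧸ (nsmulAddMonoidHom n : G →+ G).range) = 0 :=
    (QuotientAddGroup.eq_zero_iff (k • c)).2 ⟨g, hk.symm⟩
  obtain ⟨m, rfl⟩ : (n : ℤ) ∣ k := hc ▸ addOrderOf_dvd_iff_zsmul_eq_zero.2 hkc
  refine ⟨m • c, AddSubgroup.zsmul_mem_zmultiples c m, ?_⟩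
  rw [← hk, mul_smul, natCast_zsmul]

theorem addOrderOf_mk_eq_prime_pow {q m : ℕ} [Fact q.Prime] {c : G}
    (hc : ¬ ∃ g : G, q ^ m • c = q ^ (m + 1) • g) :
    addOrderOf (c : G ⧸ (nsmulAddMonoidHom (q ^ (m + 1)) : G →+ G).range) = q ^ (m + 1) := by
  refine addOrderOf_eq_prime_pow (fun h ↦ hc ?_) ?_
  · obtain ⟨g, hg⟩ := (QuotientAddGroup.eq_zero_iff (q ^ m • c)).1 h
    exact ⟨g, hg.symm⟩
  · exact (QuotientAddGroup.eq_zero_iff (q ^ (m + 1) • c)).2 ⟨c, rfl⟩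

theorem IsPureAt.exists_lift_nsmul_eq_zero {p : G →+ H} {n : ℕ} (hK : IsPureAt p.ker n)
    (hp : Function.Surjective p) {y : H} (hy : n • y = 0) :
    ∃ b : G, p b = y ∧ n • b = 0 := by
  obtain ⟨b, rfl⟩ := hp y
  have hb : n • b ∈ p.ker := by rwa [AddMonoidHom.mem_ker, map_nsmul]
  obtain ⟨k, hk, hkb⟩ := hK b hb
  refine ⟨b - k, ?_, by rw [nsmul_sub, hkb, sub_self]⟩
  rw [map_sub, AddMonoidHom.mem_ker.1 hk, sub_zero]

theorem IsPureAt.exists_lift_zmod {p : G →+ H} {n : ℕ} (hK : IsPureAt p.ker n)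
    (hp : Function.Surjective p) (f : ZMod n →+ H) :
    ∃ s : ZMod n →+ G, p.comp s = f := by
  have hf : n • f 1 = 0 := by rw [← map_nsmul, nsmul_one, ZMod.natCast_self, map_zero]
  obtain ⟨b, hb, hnb⟩ := hK.exists_lift_nsmul_eq_zero hp hf
  refine ⟨ZMod.lift n ⟨zmultiplesHom G b, by simpa using hnb⟩, ?_⟩
  ext x
  obtain ⟨k, rfl⟩ := ZMod.intCast_surjective x
  calc p (ZMod.lift n _ k) = k • f 1 := by simp [hb]
    _ = f k := by rw [← map_zsmul, zsmul_one]

theorem exists_lift_of_projective {F : Type*} [AddCommGroup F] [Module.Projective ℤ F]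
    {p : G →+ H} (hp : Function.Surjective p) (f : F →+ H) :
    ∃ s : F →+ G, p.comp s = f := by
  obtain ⟨s, hs⟩ :=
    Module.projective_lifting_property p.toIntLinearMap f.toIntLinearMap hp
  exact ⟨s.toAddMonoidHom, AddMonoidHom.ext (LinearMap.congr_fun hs)⟩

theorem IsPureAt.exists_section {F : Type*} [AddCommGroup F] [Module.Projective ℤ F] {n : ℕ}
    {p : G →+ F × ZMod n} (hK : IsPureAt p.ker n) (hp : Function.Surjective p) :
    ∃ s : F × ZMod n →+ G, p.comp s = AddMonoidHom.id (F × ZMod n) := by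
  obtain ⟨s, hs⟩ := exists_lift_of_projective hp (AddMonoidHom.inl F (ZMod n))
  obtain ⟨t, ht⟩ := hK.exists_lift_zmod hp (AddMonoidHom.inr F (ZMod n))
  exact ⟨s.coprod t, by rw [AddMonoidHom.comp_coprod, hs, ht, AddMonoidHom.coprod_inl_inr]⟩

theorem splitting_lemma_dim_eight_general {F : Type*} [AddCommGroup F] [Module.Projective ℤ F]
    {n : ℕ} (i : ℤ →+ G) (p : G →+ F × ZMod n) (hp : Function.Surjective p)
    (hip : i.range = p.ker)
    (hc : addOrderOf (i 1 : G ⧸ (nsmulAddMonoidHom n : G →+ G).range) = n) :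
    ∃ s : F × ZMod n →+ G, p.comp s = AddMonoidHom.id (F × ZMod n) := by
  have hker : AddSubgroup.zmultiples (i 1) = p.ker := by
    rw [← hip, AddMonoidHom.range_eq_map, ← Int.zmultiples_one, AddMonoidHom.map_zmultiples]
  exact IsPureAt.exists_section (hker ▸ isPureAt_zmultiples_of_addOrderOf_mk_eq hc) hp

end

/-- If `0 → ℤ → G → ℤ ⊕ ℤ/4 → 0` is a short exact sequence of abelian groups and
`2·i(1) ∉ 4G` (i.e. the image of `i(1)` in `G/4G` has order `4`), then the sequence splits:
the surjection admits a section. -/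
theorem splitting_lemma_dim_eight (G : Type*) [AddCommGroup G]
    (i : ℤ →+ G) (hi : Function.Injective i)
    (p : G →+ ℤ × ZMod 4) (hp : Function.Surjective p)
    (hip : i.range = p.ker)
    (h : ¬ ∃ g : G, 2 • i 1 = 4 • g) :
    ∃ s : ℤ × ZMod 4 →+ G, p.comp s = AddMonoidHom.id (ℤ × ZMod 4) :=
  splitting_lemma_dim_eight_general i p hp hip
    (addOrderOf_mk_eq_prime_pow (q := 2) (m := 1) h)
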